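/- Let t₁, t₂ > 0 with t₁ + t₂ = 1. Then there exists no σ-finite measure φ on Gr(V) (with the cylinder σ-algebra) that is GLB-invariant, i.e. φ(g·A) = φ(A) for every g ∈ GLB and measurable A, and is equivalent to η_{t₁,t₂}, i.e. φ and η_{t₁,t₂} are mutually absolutely continuous. (Proposition 5.8: nonexistence of an equivalent invariant measure on the grassmannian.) -/

import Mathlib

open MeasureTheory

variable (F : Type) [Field F] [Fintype F] [DecidableEq F]

/-- `V = ⊕_{i≥0} F`: the `F`-vector space of finitely supported sequences. -/
abbrev Vinf := ℕ →₀ F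

/-- `V_n`: the span of the first `n` standard basis vectors of `V`. -/
def Vn (n : ℕ) : Submodule F (Vinf F) where
  carrier := {v | ∀ i : ℕ, n ≤ i → v i = 0}
  add_mem' := by
    intro a b ha hb i hi
    simp [Finsupp.add_apply, ha i hi, hb i hi]
  zero_mem' := by
    intro i hi
    simp
  smul_mem' := by
    intro c v hv i hi
    simp [Finsupp.smul_apply, hv i hi]

/-- The group `GLB` of `F`-linear automorphisms `g` of `V` with `g(V_n) = V_n` for all
sufficiently large `n`. -/
def GLBgrp : Subgroup ((Vinf F) ≃ₗ[F] (Vinf F)) where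
  carrier := {g | ∃ N : ℕ, ∀ n : ℕ, N ≤ n →
    Submodule.map (g : (Vinf F) →ₗ[F] (Vinf F)) (Vn F n) = Vn F n}
  one_mem' := by
    refine ⟨0, fun n _ => ?_⟩
    have h1 : ((1 : (Vinf F) ≃ₗ[F] (Vinf F)) : (Vinf F) →ₗ[F] (Vinf F)) = LinearMap.id := by
      ext x; rfl
    rw [h1, Submodule.map_id]
  mul_mem' := by
    rintro g h ⟨Ng, hg⟩ ⟨Nh, hh⟩
    refine ⟨max Ng Nh, fun n hn => ?_⟩
    have h1 : ((g * h : (Vinf F) ≃ₗ[F] (Vinf F)) : (Vinf F) →ₗ[F] (Vinf F))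
        = ((g : (Vinf F) →ₗ[F] (Vinf F)).comp (h : (Vinf F) →ₗ[F] (Vinf F))) := by
      ext x; rfl
    rw [h1, Submodule.map_comp, hh n (le_trans (le_max_right _ _) hn),
      hg n (le_trans (le_max_left _ _) hn)]
  inv_mem' := by
    rintro g ⟨N, hg⟩
    refine ⟨N, fun n hn => ?_⟩
    conv_lhs => rw [← hg n hn]
    rw [← Submodule.map_comp]
    have h1 : ((g⁻¹ : (Vinf F) ≃ₗ[F] (Vinf F)) : (Vinf F) →ₗ[F] (Vinf F)).comp
        ((g : (Vinf F) →ₗ[F] (Vinf F))) = LinearMap.id := by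
      have h0 : ((g⁻¹ * g : (Vinf F) ≃ₗ[F] (Vinf F)) : (Vinf F) →ₗ[F] (Vinf F))
          = ((g⁻¹ : (Vinf F) ≃ₗ[F] (Vinf F)) : (Vinf F) →ₗ[F] (Vinf F)).comp
            ((g : (Vinf F) →ₗ[F] (Vinf F))) := by
        ext x; rfl
      rw [← h0, inv_mul_cancel]
      ext x; rfl
    rw [h1, Submodule.map_id]

/-- The Borel subgroup `B ⊆ GLB` of automorphisms with `g(V_n) = V_n` for all `n`. -/
def Bgrp : Subgroup ((Vinf F) ≃ₗ[F] (Vinf F)) where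
  carrier := {g | ∀ n : ℕ,
    Submodule.map (g : (Vinf F) →ₗ[F] (Vinf F)) (Vn F n) = Vn F n}
  one_mem' := by
    intro n
    have h1 : ((1 : (Vinf F) ≃ₗ[F] (Vinf F)) : (Vinf F) →ₗ[F] (Vinf F)) = LinearMap.id := by
      ext x; rfl
    rw [h1, Submodule.map_id]
  mul_mem' := by
    intro g h hg hh n
    have h1 : ((g * h : (Vinf F) ≃ₗ[F] (Vinf F)) : (Vinf F) →ₗ[F] (Vinf F))
        = ((g : (Vinf F) →ₗ[F] (Vinf F)).comp (h : (Vinf F) →ₗ[F] (Vinf F))) := by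
      ext x; rfl
    rw [h1, Submodule.map_comp, hh n, hg n]
  inv_mem' := by
    intro g hg n
    conv_lhs => rw [← hg n]
    rw [← Submodule.map_comp]
    have h1 : ((g⁻¹ : (Vinf F) ≃ₗ[F] (Vinf F)) : (Vinf F) →ₗ[F] (Vinf F)).comp
        ((g : (Vinf F) →ₗ[F] (Vinf F))) = LinearMap.id := by
      have h0 : ((g⁻¹ * g : (Vinf F) ≃ₗ[F] (Vinf F)) : (Vinf F) →ₗ[F] (Vinf F))
          = ((g⁻¹ : (Vinf F) ≃ₗ[F] (Vinf F)) : (Vinf F) →ₗ[F] (Vinf F)).comp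
            ((g : (Vinf F) →ₗ[F] (Vinf F))) := by
        ext x; rfl
      rw [← h0, inv_mul_cancel]
      ext x; rfl
    rw [h1, Submodule.map_id]

/-- The Borel σ-algebra of `B` for the topology of pointwise convergence: the σ-algebra
generated by the evaluations `g ↦ g(e_i)` (with the finite set `V` discrete). -/
noncomputable instance mB : MeasurableSpace ↥(Bgrp F) := by
  letI : MeasurableSpace (Vinf F) := ⊤
  exact MeasurableSpace.comap
    (fun g => fun i : ℕ => ((g : (Vinf F) ≃ₗ[F] (Vinf F)) (Finsupp.single i 1)))
    MeasurableSpace.pi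

/-- The increment `Sym(X)_{k+1} = dim(X ∩ V_{k+1}) - dim(X ∩ V_k)` of the symbol of a
subspace `X ⊆ V` (0-based indexing: `symInc X k` is the `(k+1)`-st, 1-based, entry). -/
noncomputable def symInc (X : Submodule F (Vinf F)) (k : ℕ) : ℕ :=
  Module.finrank F ↥(X ⊓ Vn F (k + 1)) - Module.finrank F ↥(X ⊓ Vn F k)

/-- The coordinate subspace `C(x) = span{e_i : x_i = 1}` of a 0–1 sequence `x`. -/
noncomputable def coordSpan (x : ℕ → Bool) : Submodule F (Vinf F) :=
  Submodule.span F ((fun i : ℕ => Finsupp.single i (1 : F)) '' {i : ℕ | x i = true})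

/-- The map `φ : {0,1}^ℕ × B → Gr(V)`, `(x, g) ↦ g·C(x)`. -/
noncomputable def phiMap (p : (ℕ → Bool) × ↥(Bgrp F)) : Submodule F (Vinf F) :=
  Submodule.map ((p.2 : (Vinf F) ≃ₗ[F] (Vinf F)) : (Vinf F) →ₗ[F] (Vinf F)) (coordSpan F p.1)

/-- The cylinder σ-algebra of the grassmannian `Gr(V)`, generated by the sets
`{X : X ∩ V_n = Y}`. -/
noncomputable instance mGr : MeasurableSpace (Submodule F (Vinf F)) :=
  MeasurableSpace.generateFrom
    {A | ∃ (n : ℕ) (Y : Submodule F (Vinf F)), A = {X | X ⊓ Vn F n = Y}}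

/-!
Under `η` the symbol of a random subspace `X` is a Bernoulli sequence, and `X` is uniformly
distributed among the subspaces with the same symbol. Let `s_n` exchange `e_n` and `e_{n+1}`, which
does not affect `X ∩ V_n`. If the symbol of `X` has the descent `1, 0` at the positions `n, n + 1`,
then `s_n` turns it into `0, 1`; as a plane contains one line with symbol `1, 0` and `q` lines with
symbol `0, 1`, this divides the `η`-mass by `q`. The descent occurs with probability `t₁ t₂`,
independently of `X ∩ V_n`.

If `φ ≪ η` is nonzero, then on some set `E` of positive `η`-measure its density varies by a factor
less than `q`, so an `s_n` preserving `φ` sends almost no point of `E` with a descent at `n` back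
into `E`. On the other hand, for large `n` the set `E` is close to an event `C` depending on
`X ∩ V_n` only; `C` is fixed by `s_n`, and a proportion `t₁ t₂` of it has a descent at `n`. Since
most of these points lie in `E` together with their images, only finitely many `s_n` can
preserve `φ`.
-/

section DensityWindow

open scoped ENNReal NNReal symmDiff
open Filter Set

variable {Ω : Type*} {mΩ : MeasurableSpace Ω} {φ η : Measure Ω}

theorem exists_density_window [SigmaFinite φ] [SigmaFinite η] (hac : φ ≪ η) (hφ : φ ≠ 0)
    {r : ℝ≥0∞} (hr : 1 < r) (hr' : r ≠ ∞) :
    ∃ (a : ℝ≥0∞) (E : Set Ω), a ≠ 0 ∧ a ≠ ∞ ∧ MeasurableSet E ∧ η E ≠ 0 ∧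
      ∀ A ⊆ E, MeasurableSet A → a * η A ≤ φ A ∧ φ A ≤ a * r * η A := by
  have hr0 : r ≠ 0 := (zero_lt_one.trans hr).ne'
  set f := φ.rnDeriv η
  have hf : Measurable f := Measure.measurable_rnDeriv φ η
  have hφA {A : Set Ω} (hA : MeasurableSet A) : φ A = ∫⁻ x in A, f x ∂η := by
    rw [← withDensity_apply _ hA, Measure.withDensity_rnDeriv_eq φ η hac]
  obtain ⟨k, hk⟩ : ∃ k : ℤ, η (f ⁻¹' Ico (r ^ k) (r ^ (k + 1))) ≠ 0 := by
    by_contra! h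
    have hnull : ∀ᵐ x ∂η, ∀ k : ℤ, f x ∉ Ico (r ^ k) (r ^ (k + 1)) :=
      ae_all_iff.2 fun k => measure_eq_zero_iff_ae_notMem.1 (h k)
    have hf0 : f =ᵐ[η] 0 := by
      filter_upwards [hnull, Measure.rnDeriv_lt_top φ η] with x hx hlt
      by_contra hpos
      obtain ⟨k, hk⟩ := ENNReal.exists_mem_Ico_zpow hpos hlt.ne hr hr'
      exact hx k hk
    exact hφ (by rw [← Measure.withDensity_rnDeriv_eq φ η hac, withDensity_congr_ae hf0,
      withDensity_zero])
  refine ⟨r ^ k, f ⁻¹' Ico (r ^ k) (r ^ (k + 1)), (ENNReal.zpow_pos hr0 hr' k).ne',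
    (ENNReal.zpow_lt_top hr0 hr' k).ne, hf measurableSet_Ico, hk, fun A hAE hA => ?_⟩
  have hsucc : r ^ k * r = r ^ (k + 1) := by rw [ENNReal.zpow_add hr0 hr', zpow_one]
  rw [hφA hA, hsucc, ← setLIntegral_const, ← setLIntegral_const]
  exact ⟨setLIntegral_mono hf fun x hx => (hAE hx).1,
    setLIntegral_mono measurable_const fun x hx => (hAE hx).2.le⟩

theorem measure_eq_zero_of_subset_window [IsFiniteMeasure η] {s : Ω → Ω}
    (hs : MeasurePreserving s φ φ) {a r : ℝ≥0∞} {q : ℝ≥0} (ha : a ≠ 0) (ha' : a ≠ ∞) (hrq : r < q)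
    {E A : Set Ω} (hE : ∀ A ⊆ E, MeasurableSet A → a * η A ≤ φ A ∧ φ A ≤ a * r * η A)
    (hA : MeasurableSet A) (hAE : A ⊆ E) (hsA : s ⁻¹' A ⊆ E) (hscale : η A = q * η (s ⁻¹' A)) :
    η A = 0 := by
  have hle : a * (q * η (s ⁻¹' A)) ≤ a * (r * η (s ⁻¹' A)) :=
    calc a * (q * η (s ⁻¹' A)) = a * η A := by rw [hscale]
      _ ≤ φ A := (hE A hAE hA).1
      _ = φ (s ⁻¹' A) := (hs.measure_preimage hA.nullMeasurableSet).symm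
      _ ≤ a * r * η (s ⁻¹' A) := (hE _ hsA (hs.measurable hA)).2
      _ = a * (r * η (s ⁻¹' A)) := mul_assoc ..
  rw [ENNReal.mul_le_mul_iff_right ha ha'] at hle
  by_contra hne
  have hne' : η (s ⁻¹' A) ≠ 0 := fun h => hne (by rw [hscale, h, mul_zero])
  exact hrq.not_ge ((ENNReal.mul_le_mul_iff_left hne' (measure_ne_top _ _)).1 hle)

theorem mul_measure_le_mul_measure_symmDiff {s : Ω → Ω} (hs : Measurable s)
    (hinv : Function.Involutive s) {p q : ℝ≥0} {S C E : Set Ω} (hS : MeasurableSet S)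
    (hC : MeasurableSet C) (hE : MeasurableSet E) (hsC : s ⁻¹' C = C)
    (hCS : p * η C ≤ η (C ∩ S))
    (hscale : ∀ A ⊆ S, MeasurableSet A → η A = q * η (s ⁻¹' A))
    (hnull : η (C ∩ S ∩ E ∩ s ⁻¹' E) = 0) :
    p * η E ≤ (p + 1 + q) * η (E ∆ C) := by
  have hEC : E ⊆ C ∪ E ∆ C := fun x hx => or_iff_not_imp_left.2 fun h => Or.inl ⟨hx, h⟩
  have hsub : C ∩ S ⊆ C ∩ S ∩ E ∩ s ⁻¹' E ∪ E ∆ C ∪ (C ∩ S) \ s ⁻¹' E := by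
    intro x hx
    by_cases hxE : x ∈ E
    · by_cases hsx : x ∈ s ⁻¹' E
      · exact Or.inl (Or.inl ⟨⟨hx, hxE⟩, hsx⟩)
      · exact Or.inr ⟨hx, hsx⟩
    · exact Or.inl (Or.inr (Or.inr ⟨hx.1, hxE⟩))
  have hsdiff : s ⁻¹' ((C ∩ S) \ s ⁻¹' E) ⊆ E ∆ C := by
    rintro x ⟨⟨hxC, -⟩, hxE⟩
    rw [mem_preimage, hinv x] at hxE
    exact Or.inr ⟨hsC.subset hxC, hxE⟩
  calc p * η E ≤ p * (η C + η (E ∆ C)) := by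
        gcongr; exact (measure_mono hEC).trans (measure_union_le _ _)
    _ ≤ η (C ∩ S) + p * η (E ∆ C) := by rw [mul_add]; gcongr
    _ ≤ 0 + η (E ∆ C) + q * η (E ∆ C) + p * η (E ∆ C) := by
        gcongr
        refine (measure_mono hsub).trans ((measure_union_le _ _).trans (add_le_add ?_ ?_))
        · exact (measure_union_le _ _).trans_eq (by rw [hnull])
        · rw [hscale _ (sdiff_subset.trans inter_subset_right) ((hC.inter hS).diff (hs hE))]
          gcongr
    _ = (p + 1 + q) * η (E ∆ C) := by ring

theorem isSetAlgebra_measurableSet_filtration (ℱ : Filtration ℕ mΩ) :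
    IsSetAlgebra {A | ∃ n, MeasurableSet[ℱ n] A} where
  empty_mem := ⟨0, @MeasurableSet.empty _ (ℱ 0)⟩
  compl_mem := fun _ ⟨n, hA⟩ => ⟨n, hA.compl⟩
  union_mem := fun _ _ ⟨m, hA⟩ ⟨n, hB⟩ => ⟨max m n,
    (ℱ.mono (le_max_left m n) _ hA).union (ℱ.mono (le_max_right m n) _ hB)⟩

theorem generateFrom_measurableSet_filtration (ℱ : Filtration ℕ mΩ) :
    MeasurableSpace.generateFrom {A | ∃ n, MeasurableSet[ℱ n] A} = ⨆ n, ℱ n := by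
  rw [← MeasurableSpace.generateFrom_iUnion_measurableSet]
  congr 1
  ext A
  simp

theorem eq_zero_of_frequently_measurePreserving [IsFiniteMeasure η] [SigmaFinite φ] (hac : φ ≪ η)
    (ℱ : Filtration ℕ mΩ) (hℱ : ⨆ n, ℱ n = mΩ) {p q : ℝ≥0} (hp : p ≠ 0) (hq : 1 < q)
    {s : ℕ → Ω → Ω} (hinv : ∀ n, Function.Involutive (s n))
    {S : ℕ → Set Ω} (hS : ∀ n, MeasurableSet (S n))
    (hs : ∀ n C, MeasurableSet[ℱ n] C → s n ⁻¹' C = C)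
    (hSind : ∀ n C, MeasurableSet[ℱ n] C → η (C ∩ S n) = p * η C)
    (hscale : ∀ n, ∀ A ⊆ S n, MeasurableSet A → η A = q * η (s n ⁻¹' A))
    (hφ : ∃ᶠ n in atTop, MeasurePreserving (s n) φ φ) : φ = 0 := by
  by_contra hφ0
  obtain ⟨r, hr, hrq⟩ := exists_between (ENNReal.one_lt_coe_iff.2 hq)
  obtain ⟨a, E, ha, ha', hE, hηE, hwindow⟩ := exists_density_window hac hφ0 hr hrq.ne_top
  set δ : ℝ≥0∞ := p * η E / (p + 1 + q)
  have hδ : δ ≠ ∞ := ENNReal.div_ne_top (ENNReal.mul_ne_top ENNReal.coe_ne_top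
    (measure_ne_top _ _)) (by simp)
  have hδ0 : δ ≠ 0 := ENNReal.div_ne_zero.2
    ⟨mul_ne_zero (ENNReal.coe_ne_zero.2 hp) hηE, by finiteness⟩
  obtain ⟨C, ⟨m, hC⟩, hEC⟩ := (Measure.MeasureDense.of_generateFrom_isSetAlgebra_finite η
    (isSetAlgebra_measurableSet_filtration ℱ)
    (hℱ.symm.trans (generateFrom_measurableSet_filtration ℱ).symm)).approx E hE
    (measure_ne_top _ _) δ.toReal (ENNReal.toReal_pos hδ0 hδ)
  obtain ⟨n, hmn, hsn⟩ := frequently_atTop.1 hφ m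
  have hCn : MeasurableSet[ℱ n] C := ℱ.mono hmn _ hC
  have hC' : MeasurableSet C := ℱ.le n _ hCn
  have hnull : η (C ∩ S n ∩ E ∩ s n ⁻¹' E) = 0 := by
    have hA : MeasurableSet (C ∩ S n ∩ E ∩ s n ⁻¹' E) :=
      ((hC'.inter (hS n)).inter hE).inter (hsn.measurable hE)
    refine measure_eq_zero_of_subset_window hsn ha ha' hrq hwindow hA
      (fun x hx => hx.1.2) (fun x hx => ?_) (hscale n _ (fun x hx => hx.1.1.2) hA)
    simpa only [mem_preimage, hinv n x] using hx.2
  have hle := mul_measure_le_mul_measure_symmDiff hsn.measurable (hinv n) (hS n) hC' hE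
    (hs n C hCn) (hSind n C hCn).ge (hscale n) hnull
  rw [ENNReal.ofReal_toReal hδ, ENNReal.lt_div_iff_mul_lt (by simp) (Or.inl (by finiteness)),
    mul_comm] at hEC
  exact hle.not_gt hEC

end DensityWindow

section Grassmannian

open scoped Pointwise
open Set

variable {K : Type} [Field K]

theorem mem_Vn {n : ℕ} {v : Vinf K} : v ∈ Vn K n ↔ ∀ i, n ≤ i → v i = 0 := Iff.rfl

theorem Vn_eq_supported (n : ℕ) : Vn K n = Finsupp.supported K K (Iio n) := by
  ext v
  simp only [mem_Vn, Finsupp.mem_supported', mem_Iio, not_lt]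

theorem Vn_eq_span (n : ℕ) :
    Vn K n = Submodule.span K ((fun i => Finsupp.single i (1 : K)) '' Iio n) := by
  rw [Vn_eq_supported, Finsupp.supported_eq_span_single]

theorem monotone_Vn : Monotone (Vn K) := fun _ _ hmn _ hv i hi => hv i (hmn.trans hi)

theorem single_mem_Vn {i n : ℕ} (h : i < n) (a : K) : Finsupp.single i a ∈ Vn K n := by
  rw [Vn_eq_supported]
  exact Finsupp.single_mem_supported K a h

theorem exists_mem_Vn (v : Vinf K) : ∃ n, v ∈ Vn K n := by
  obtain ⟨n, hn⟩ := v.support.exists_nat_subset_range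
  exact ⟨n, fun i hi => Finsupp.notMem_support_iff.1 fun h =>
    (Finset.mem_range.1 (hn h)).not_ge hi⟩

theorem mem_Vn_of_mem_Vn_succ {i : ℕ} {v : Vinf K} (hv : v ∈ Vn K (i + 1)) (h : v i = 0) :
    v ∈ Vn K i := fun j hj => by
  obtain rfl | hlt := hj.eq_or_lt
  exacts [h, hv j hlt]

instance finiteDimensional_Vn (n : ℕ) : FiniteDimensional K (Vn K n) := by
  rw [Vn_eq_span]
  exact FiniteDimensional.span_of_finite K ((finite_Iio n).image _)

theorem finite_setOf_le_Vn [Finite K] (n : ℕ) : {Y : Submodule K (Vinf K) | Y ≤ Vn K n}.Finite := by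
  have : Finite (Vn K n) := Module.finite_of_finite K
  refine Finite.of_finite_image (f := fun Y : Submodule K (Vinf K) => (Y : Set (Vinf K)))
    ((toFinite (Vn K n : Set (Vinf K))).finite_subsets.subset ?_) SetLike.coe_injective.injOn
  rintro _ ⟨Y, hY, rfl⟩
  exact hY

theorem smul_Vn_eq_of_le {g : Vinf K ≃ₗ[K] Vinf K} {n : ℕ} (h : g • Vn K n ≤ Vn K n) :
    g • Vn K n = Vn K n :=
  Submodule.eq_of_le_of_finrank_eq h (g.finrank_map_eq (Vn K n))

theorem map_Vn_le {f : Vinf K →ₗ[K] Vinf K}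
    (hf : ∀ i, f (Finsupp.single i 1) ∈ Vn K (i + 1)) (n : ℕ) : (Vn K n).map f ≤ Vn K n := by
  rw [Submodule.map_le_iff_le_comap]
  conv_lhs => rw [Vn_eq_span]
  rw [Submodule.span_le]
  rintro _ ⟨i, hi, rfl⟩
  exact monotone_Vn (Nat.succ_le_of_lt hi) (hf i)

/-- The truncation `X ∩ V_m`, the level-`m` information on a point `X` of the grassmannian. -/
noncomputable def trunc (m : ℕ) (X : Submodule K (Vinf K)) : Submodule K (Vinf K) := X ⊓ Vn K m

theorem trunc_le (m : ℕ) (X : Submodule K (Vinf K)) : trunc m X ≤ Vn K m := inf_le_right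

theorem trunc_trunc_of_le {m n : ℕ} (h : m ≤ n) (X : Submodule K (Vinf K)) :
    trunc m (trunc n X) = trunc m X := by
  rw [trunc, trunc, trunc, inf_assoc, inf_eq_right.2 (monotone_Vn h)]

theorem smul_trunc {g : Vinf K ≃ₗ[K] Vinf K} {m : ℕ} (hg : g • Vn K m = Vn K m)
    (X : Submodule K (Vinf K)) : g • trunc m X = trunc m (g • X) :=
  (Submodule.map_inf _ g.injective).trans (congrArg (g • X ⊓ ·) hg)

open Classical in
/-- The symbol of a subspace as a `0`-`1` sequence. Entry `i` records whether
`X ∩ V_i ≠ X ∩ V_{i+1}`, i.e. whether the dimension jumps there. -/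
noncomputable def symbol (X : Submodule K (Vinf K)) (i : ℕ) : Bool := ¬ trunc (i + 1) X ≤ Vn K i

variable {X Y : Submodule K (Vinf K)} {i m n : ℕ}

theorem symbol_eq_false : symbol X i = false ↔ ∀ v ∈ trunc (i + 1) X, v i = 0 := by
  rw [symbol, decide_eq_false_iff_not, not_not]
  exact ⟨fun h v hv => h hv i le_rfl, fun h v hv => mem_Vn_of_mem_Vn_succ hv.2 (h v hv)⟩

theorem symbol_eq_true : symbol X i = true ↔ ∃ v ∈ trunc (i + 1) X, v i ≠ 0 := by
  rw [← Bool.not_eq_false, symbol_eq_false]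
  push Not
  rfl

theorem symbol_congr_of_trunc_eq (h : trunc m X = trunc m Y) (hi : i < m) :
    symbol X i = symbol Y i := by
  rw [symbol, symbol, ← trunc_trunc_of_le (Nat.succ_le_of_lt hi), h, trunc_trunc_of_le hi]

theorem symbol_trunc (hi : i < m) : symbol (trunc m X) i = symbol X i :=
  symbol_congr_of_trunc_eq (trunc_trunc_of_le le_rfl X) hi

theorem symbol_eq_false_of_le_Vn (hX : X ≤ Vn K m) (hi : m ≤ i) : symbol X i = false :=
  symbol_eq_false.2 fun _ hv => hX hv.1 i hi

theorem symbol_smul_apply {g : Vinf K ≃ₗ[K] Vinf K} (h₀ : g • Vn K i = Vn K i)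
    (h₁ : g • Vn K (i + 1) = Vn K (i + 1)) (X : Submodule K (Vinf K)) :
    symbol (g • X) i = symbol X i := by
  have hle : g • trunc (i + 1) X ≤ g • Vn K i ↔ trunc (i + 1) X ≤ Vn K i :=
    Submodule.map_le_map_iff_of_injective g.injective _ _
  rw [symbol, symbol, ← smul_trunc h₁, ← hle, h₀]

theorem symbol_smul {g : Vinf K ≃ₗ[K] Vinf K} (hg : g ∈ Bgrp K) (X : Submodule K (Vinf K)) :
    symbol (g • X) = symbol X :=
  funext fun i => symbol_smul_apply (hg i) (hg (i + 1)) X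

theorem eq_of_le_of_symbol_le (hXY : X ≤ Y) (h : symbol Y ≤ symbol X) : X = Y := by
  have htrunc : ∀ n, trunc n Y ≤ X := by
    intro n
    induction n with
    | zero =>
      rintro v ⟨-, hv⟩
      have hv0 : v = 0 := Finsupp.ext fun i => hv i i.zero_le
      exact hv0 ▸ X.zero_mem
    | succ n ih =>
      rintro v ⟨hvY, hv⟩
      by_cases hvn : v n = 0
      · exact ih ⟨hvY, mem_Vn_of_mem_Vn_succ hv hvn⟩
      obtain ⟨w, ⟨hwX, hw⟩, hwn⟩ := symbol_eq_true.1
        (Bool.le_iff_imp.1 (h n) (symbol_eq_true.2 ⟨v, ⟨hvY, hv⟩, hvn⟩))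
      have hsub : v - (v n / w n) • w ∈ X := ih
        ⟨Y.sub_mem hvY (Y.smul_mem _ (hXY hwX)), mem_Vn_of_mem_Vn_succ
          (sub_mem hv (Submodule.smul_mem _ _ hw)) (by simp [div_mul_cancel₀ _ hwn])⟩
      exact (Submodule.sub_mem_iff_left _ (X.smul_mem _ hwX)).1 hsub
  refine hXY.antisymm fun v hv => ?_
  obtain ⟨n, hn⟩ := exists_mem_Vn v
  exact htrunc n ⟨hv, hn⟩

theorem map_apply_of_mem_Vn_succ {f : Vinf K →ₗ[K] Vinf K}
    (hf : ∀ i, f (Finsupp.single i 1) ∈ Vn K (i + 1)) {v : Vinf K} (hv : v ∈ Vn K (i + 1)) :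
    f v i = v i * f (Finsupp.single i 1) i := by
  have hsub : v - v i • Finsupp.single i 1 ∈ Vn K i := mem_Vn_of_mem_Vn_succ
    (sub_mem hv (Submodule.smul_mem _ _ (single_mem_Vn i.lt_succ_self _))) (by simp)
  have hfi := map_Vn_le hf i (Submodule.mem_map_of_mem hsub) i le_rfl
  rw [map_sub, map_smul, Finsupp.sub_apply, Finsupp.smul_apply, smul_eq_mul] at hfi
  exact sub_eq_zero.1 hfi

theorem exists_mem_Bgrp_forall_single {v : ℕ → Vinf K} (hv : ∀ i, v i ∈ Vn K (i + 1))
    (hvi : ∀ i, v i i ≠ 0) : ∃ b ∈ Bgrp K, ∀ i, b (Finsupp.single i 1) = v i := by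
  set f : Vinf K →ₗ[K] Vinf K := Finsupp.linearCombination K v
  have hf (i : ℕ) : f (Finsupp.single i 1) = v i := by simp [f]
  have hfV (i : ℕ) : f (Finsupp.single i 1) ∈ Vn K (i + 1) := (hf i).symm ▸ hv i
  have hker : ⊥ = LinearMap.ker f := eq_of_le_of_symbol_le bot_le fun i =>
    Bool.le_iff_imp.2 fun hi => by
      obtain ⟨w, ⟨hwker, hw⟩, hwi⟩ := symbol_eq_true.1 hi
      have hmul := map_apply_of_mem_Vn_succ hfV hw
      rw [LinearMap.mem_ker.1 hwker, hf] at hmul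
      exact absurd hmul.symm (mul_ne_zero hwi (hvi i))
  have hrange : LinearMap.range f = ⊤ := eq_of_le_of_symbol_le le_top fun i =>
    Bool.le_iff_imp.2 fun _ => symbol_eq_true.2 ⟨v i, ⟨⟨_, hf i⟩, hv i⟩, hvi i⟩
  let g : Vinf K ≃ₗ[K] Vinf K := LinearEquiv.ofBijective f
    ⟨LinearMap.ker_eq_bot.1 hker.symm, LinearMap.range_eq_top.1 hrange⟩
  exact ⟨g, fun n => smul_Vn_eq_of_le (g := g) (map_Vn_le hfV n), hf⟩

theorem single_mem_coordSpan {x : ℕ → Bool} (hi : x i = true) :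
    Finsupp.single i 1 ∈ coordSpan K x := Submodule.subset_span ⟨i, hi, rfl⟩

theorem symbol_coordSpan (x : ℕ → Bool) : symbol (coordSpan K x) = x := by
  funext i
  rw [Bool.eq_iff_iff, symbol_eq_true]
  constructor
  · rintro ⟨v, ⟨hv, -⟩, hvi⟩
    have hsupp : v ∈ Finsupp.supported K K {i | x i = true} := by
      rwa [Finsupp.supported_eq_span_single]
    exact not_not.1 fun hi => hvi ((Finsupp.mem_supported' K v).1 hsupp i hi)
  · exact fun hi => ⟨Finsupp.single i 1,
      ⟨single_mem_coordSpan hi, single_mem_Vn i.lt_succ_self 1⟩, by simp⟩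

theorem exists_mem_Bgrp_smul_coordSpan (X : Submodule K (Vinf K)) :
    ∃ b ∈ Bgrp K, b • coordSpan K (symbol X) = X := by
  have hpivot (i : ℕ) : ∃ v ∈ Vn K (i + 1), v i ≠ 0 ∧ (symbol X i = true → v ∈ X) := by
    cases hi : symbol X i with
    | false => exact ⟨Finsupp.single i 1, single_mem_Vn i.lt_succ_self 1, by simp, by simp⟩
    | true =>
      obtain ⟨v, ⟨hvX, hv⟩, hvi⟩ := symbol_eq_true.1 hi
      exact ⟨v, hv, hvi, fun _ => hvX⟩
  choose v hv hvi hvX using hpivot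
  obtain ⟨b, hb, hbv⟩ := exists_mem_Bgrp_forall_single hv hvi
  refine ⟨b, hb, eq_of_le_of_symbol_le ?_ (by rw [symbol_smul hb, symbol_coordSpan])⟩
  refine Submodule.map_le_iff_le_comap.2 (Submodule.span_le.2 ?_)
  rintro _ ⟨i, hi, rfl⟩
  have hbX : b (Finsupp.single i 1) ∈ X := by rw [hbv i]; exact hvX i hi
  exact hbX

theorem exists_smul_eq_of_symbol_eq (h : symbol X = symbol Y) : ∃ b : Bgrp K, b • X = Y := by
  obtain ⟨b, hb, hbX⟩ := exists_mem_Bgrp_smul_coordSpan X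
  obtain ⟨c, hc, hcY⟩ := exists_mem_Bgrp_smul_coordSpan Y
  refine ⟨⟨c, hc⟩ * ⟨b, hb⟩⁻¹, ?_⟩
  rw [mul_smul, inv_smul_eq_iff.2 (show X = (⟨b, hb⟩ : Bgrp K) • _ from hbX.symm), h]
  exact hcY

section AdjacentSwap

variable (K) in
/-- The automorphism of `V` exchanging the adjacent basis vectors `e_n` and `e_{n+1}`. -/
noncomputable def adjSwap (n : ℕ) : Vinf K ≃ₗ[K] Vinf K :=
  Finsupp.domLCongr (Equiv.swap n (n + 1))

theorem adjSwap_apply (n : ℕ) (v : Vinf K) (i : ℕ) :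
    adjSwap K n v i = v (Equiv.swap n (n + 1) i) := by
  simp [adjSwap, Finsupp.equivMapDomain_apply]

theorem adjSwap_mul_self (n : ℕ) : adjSwap K n * adjSwap K n = (1 : Vinf K ≃ₗ[K] Vinf K) := by
  ext1 v
  refine Finsupp.ext fun i => ?_
  simp [adjSwap_apply]

theorem involutive_adjSwap_smul (n : ℕ) :
    Function.Involutive (fun X : Submodule K (Vinf K) => adjSwap K n • X) :=
  fun X => by simp only [← mul_smul, adjSwap_mul_self, one_smul]

theorem adjSwap_smul_Vn (h : m ≠ n + 1) : adjSwap K n • Vn K m = Vn K m := by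
  refine smul_Vn_eq_of_le ?_
  rintro _ ⟨v, hv, rfl⟩ i hi
  refine (adjSwap_apply n v i).trans (hv _ ?_)
  rw [Equiv.swap_apply_def]
  split_ifs <;> omega

theorem adjSwap_mem_GLBgrp (n : ℕ) : adjSwap K n ∈ GLBgrp K :=
  ⟨n + 2, fun _ hm => adjSwap_smul_Vn (by omega)⟩

theorem trunc_adjSwap_smul (n : ℕ) (X : Submodule K (Vinf K)) :
    trunc n (adjSwap K n • X) = trunc n X := by
  have hfix (v : Vinf K) (hv : v ∈ Vn K n) : adjSwap K n v = v := Finsupp.ext fun i => by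
    rw [adjSwap_apply, Equiv.swap_apply_def]
    split_ifs with h₁ h₂
    · rw [hv _ n.le_succ, hv i h₁.ge]
    · rw [hv _ le_rfl, hv i (by omega)]
    · rfl
  rw [← smul_trunc (adjSwap_smul_Vn (by omega))]
  ext v
  refine ⟨?_, fun hv => ⟨v, hv, hfix v hv.2⟩⟩
  rintro ⟨w, hw, rfl⟩
  exact (hfix w hw.2).symm ▸ hw

/-- The elementary transvection of `V` fixing every basis vector except
`e_{n+1} ↦ e_{n+1} + c e_n`. -/
noncomputable def adjTransvection (n : ℕ) (c : K) : Vinf K ≃ₗ[K] Vinf K :=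
  LinearEquiv.transvection (f := Finsupp.lapply (n + 1)) (v := Finsupp.single n c) (by simp)

theorem adjTransvection_apply (n : ℕ) (c : K) (v : Vinf K) :
    adjTransvection n c v = v + v (n + 1) • Finsupp.single n c :=
  LinearEquiv.transvection.apply _ _

theorem adjTransvection_apply_self (n : ℕ) (c : K) (v : Vinf K) :
    adjTransvection n c v n = v n + c * v (n + 1) := by
  simp [adjTransvection_apply, mul_comm]

theorem adjTransvection_apply_succ (n : ℕ) (c : K) (v : Vinf K) :
    adjTransvection n c v (n + 1) = v (n + 1) := by
  simp [adjTransvection_apply]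

theorem adjTransvection_mem_Bgrp (n : ℕ) (c : K) : adjTransvection n c ∈ Bgrp K := by
  refine fun m => smul_Vn_eq_of_le (g := adjTransvection n c) ?_
  rintro _ ⟨v, hv, rfl⟩
  have hcv : v (n + 1) • Finsupp.single n c ∈ Vn K m := by
    obtain hm | hm := le_or_gt m (n + 1)
    · rw [hv _ hm, zero_smul]; exact zero_mem _
    · exact Submodule.smul_mem _ _ (single_mem_Vn (by omega) c)
  exact (adjTransvection_apply n c v).symm ▸ add_mem hv hcv

theorem adjTransvection_zero (n : ℕ) : adjTransvection n (0 : K) = 1 := by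
  ext1 v
  simp [adjTransvection_apply]

/-- The `0`-`1` sequences with a descent `1, 0` at the positions `n, n + 1`. -/
def descents (n : ℕ) : Set (ℕ → Bool) := {x | x n = true ∧ x (n + 1) = false}

theorem symbol_adjSwap_smul_mem_descents {c : K} :
    symbol (adjSwap K n • adjTransvection n c • X) ∈ descents n ↔
      symbol X (n + 1) = true ∧ ∀ v ∈ trunc (n + 2) X, v n + c * v (n + 1) = 0 := by
  set g : Vinf K ≃ₗ[K] Vinf K := adjSwap K n * adjTransvection n c
  have hgn (v : Vinf K) : g v n = v (n + 1) := by
    rw [LinearEquiv.mul_apply, adjSwap_apply, Equiv.swap_apply_left, adjTransvection_apply_succ]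
  have hgn' (v : Vinf K) : g v (n + 1) = v n + c * v (n + 1) := by
    rw [LinearEquiv.mul_apply, adjSwap_apply, Equiv.swap_apply_right, adjTransvection_apply_self]
  have hg : g • Vn K (n + 2) = Vn K (n + 2) := by
    rw [mul_smul, show adjTransvection n c • Vn K (n + 2) = _ from
      adjTransvection_mem_Bgrp n c (n + 2), adjSwap_smul_Vn (by omega)]
  have htrunc : trunc (n + 2) (g • X) = g • trunc (n + 2) X := (smul_trunc hg X).symm
  have hzero : symbol (g • X) (n + 1) = false ↔
      ∀ v ∈ trunc (n + 2) X, v n + c * v (n + 1) = 0 := by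
    rw [symbol_eq_false, htrunc]
    exact ⟨fun h v hv => hgn' v ▸ h _ ⟨v, hv, rfl⟩,
      by rintro h _ ⟨v, hv, rfl⟩; exact (hgn' v).trans (h v hv)⟩
  rw [← mul_smul, descents, mem_ofPred_eq, hzero, and_congr_left_iff]
  intro h
  rw [symbol_eq_true, symbol_eq_true]
  constructor
  · rintro ⟨_, ⟨hw, hwV⟩, hwn⟩
    obtain ⟨v, hv, rfl⟩ := htrunc.le ⟨hw, monotone_Vn (by omega) hwV⟩
    exact ⟨v, hv, hgn v ▸ hwn⟩
  · rintro ⟨v, hv, hvn⟩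
    obtain ⟨hw, hwV⟩ := htrunc.ge ⟨v, hv, rfl⟩
    exact ⟨g v, ⟨hw, mem_Vn_of_mem_Vn_succ hwV ((hgn' v).trans (h v hv))⟩, (hgn v).symm ▸ hvn⟩

theorem symbol_adjSwap_smul {c : K}
    (h : symbol (adjSwap K n • adjTransvection n c • X) ∈ descents n) :
    symbol (adjSwap K n • adjTransvection n c • X) = symbol X ∘ Equiv.swap n (n + 1) := by
  obtain ⟨hX₁, hX⟩ := symbol_adjSwap_smul_mem_descents.1 h
  funext i
  rw [Function.comp_apply]
  obtain rfl | hi := eq_or_ne i n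
  · rw [Equiv.swap_apply_left, h.1, hX₁]
  obtain rfl | hi' := eq_or_ne i (n + 1)
  · rw [Equiv.swap_apply_right, h.2, eq_comm, symbol_eq_false]
    intro v hv
    have hv₁ := hX v ⟨hv.1, monotone_Vn (Nat.le_succ _) hv.2⟩
    rwa [hv.2 (n + 1) le_rfl, mul_zero, add_zero] at hv₁
  · rw [Equiv.swap_apply_of_ne_of_ne hi hi', symbol_smul_apply (adjSwap_smul_Vn hi')
      (adjSwap_smul_Vn (by omega)), symbol_smul (adjTransvection_mem_Bgrp n c)]

theorem exists_symbol_adjSwap_smul_mem_descents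
    (h : symbol X ∘ Equiv.swap n (n + 1) ∈ descents n) :
    ∃ c : K, symbol (adjSwap K n • adjTransvection n c • X) ∈ descents n := by
  obtain ⟨h₁, h₀⟩ : symbol X (n + 1) = true ∧ symbol X n = false := by
    simpa only [descents, mem_ofPred_eq, Function.comp_apply, Equiv.swap_apply_left,
      Equiv.swap_apply_right] using h
  obtain ⟨w, hw, hwn⟩ := symbol_eq_true.1 h₁
  refine ⟨-(w n / w (n + 1)), symbol_adjSwap_smul_mem_descents.2 ⟨h₁, fun v hv => ?_⟩⟩
  have hsub : v - (v (n + 1) / w (n + 1)) • w ∈ trunc (n + 2) X :=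
    sub_mem hv (Submodule.smul_mem _ _ hw)
  have hn := symbol_eq_false.1 h₀ _
    ⟨hsub.1, mem_Vn_of_mem_Vn_succ hsub.2 (by simp [div_mul_cancel₀ _ hwn])⟩
  rw [Finsupp.sub_apply, Finsupp.smul_apply, smul_eq_mul] at hn
  rw [← hn]
  ring

theorem eq_of_symbol_adjSwap_smul_mem_descents {c d : K}
    (hc : symbol (adjSwap K n • adjTransvection n c • X) ∈ descents n)
    (hd : symbol (adjSwap K n • adjTransvection n d • X) ∈ descents n) : c = d := by
  rw [symbol_adjSwap_smul_mem_descents] at hc hd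
  obtain ⟨v, hv, hvn⟩ := symbol_eq_true.1 hc.1
  exact mul_right_cancel₀ hvn (add_left_cancel ((hc.2 v hv).trans (hd.2 v hv).symm))

theorem symbol_adjSwap_smul_of_mem_descents (h : symbol X ∈ descents n) :
    symbol (adjSwap K n • X) = symbol X ∘ Equiv.swap n (n + 1) := by
  have hX : adjSwap K n • adjTransvection n (0 : K) • adjSwap K n • X = X := by
    rw [adjTransvection_zero, one_smul]
    exact involutive_adjSwap_smul n X
  have hcomp := symbol_adjSwap_smul (hX.symm ▸ h)
  rw [hX] at hcomp
  rw [hcomp, Function.comp_assoc, ← Equiv.coe_trans, Equiv.swap_swap, Equiv.coe_refl,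
    Function.comp_id]

end AdjacentSwap

section Measurability

variable [Finite K]

theorem measurableSet_preimage_trunc (m : ℕ) (S : Set (Submodule K (Vinf K))) :
    MeasurableSet (trunc m ⁻¹' S) := by
  have hS : trunc m ⁻¹' S = ⋃ Y ∈ S ∩ {Y | Y ≤ Vn K m}, {X | X ⊓ Vn K m = Y} := by
    ext X
    simp [trunc]
  rw [hS]
  exact ((finite_setOf_le_Vn m).subset inter_subset_right).measurableSet_biUnion
    fun Y _ => MeasurableSpace.measurableSet_generateFrom ⟨m, Y, rfl⟩

variable (K) in
/-- The filtration of `Gr(V)` whose `m`-th σ-algebra consists of the events depending on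
`X ∩ V_m` only. -/
noncomputable def levelFiltration : Filtration ℕ (mGr K) where
  seq m := MeasurableSpace.comap (trunc m) ⊤
  mono' m n hmn := by
    rintro _ ⟨S, -, rfl⟩
    refine ⟨trunc m ⁻¹' S, trivial, ?_⟩
    ext X
    rw [mem_preimage, mem_preimage, mem_preimage, trunc_trunc_of_le hmn]
  le' m := by
    rintro _ ⟨S, -, rfl⟩
    exact measurableSet_preimage_trunc m S

theorem measurableSet_levelFiltration {A : Set (Submodule K (Vinf K))} :
    MeasurableSet[levelFiltration K m] A ↔ ∃ S, trunc m ⁻¹' S = A :=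
  ⟨fun ⟨S, _, hS⟩ => ⟨S, hS⟩, fun ⟨S, hS⟩ => ⟨S, trivial, hS⟩⟩

theorem iSup_levelFiltration : ⨆ m, levelFiltration K m = mGr K := by
  refine le_antisymm (iSup_le (levelFiltration K).le) (MeasurableSpace.generateFrom_le ?_)
  rintro _ ⟨m, Y, rfl⟩
  exact le_iSup (levelFiltration K) m _ (measurableSet_levelFiltration.2 ⟨{Y}, rfl⟩)

theorem measurable_symbol : Measurable (symbol : Submodule K (Vinf K) → ℕ → Bool) := by
  refine measurable_pi_iff.2 fun i S _ => ?_
  convert measurableSet_preimage_trunc (i + 1) {X : Submodule K (Vinf K) | symbol X i ∈ S} using 1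
  ext X
  simp [symbol_trunc i.lt_succ_self]

omit [Finite K] in
theorem measurable_of_preimage_trunc {α : Type*} [MeasurableSpace α]
    {f : α → Submodule K (Vinf K)} {N : ℕ}
    (hf : ∀ m, N ≤ m → ∀ S, MeasurableSet ((fun a => trunc m (f a)) ⁻¹' S)) : Measurable f := by
  refine measurable_generateFrom ?_
  rintro _ ⟨m, Y, rfl⟩
  convert hf (max m N) (le_max_right m N) {Z | trunc m Z = Y} using 1
  ext a
  change trunc m (f a) = Y ↔ trunc m (trunc (max m N) (f a)) = Y
  rw [trunc_trunc_of_le (le_max_left m N)]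

theorem measurable_smul_of_mem_GLBgrp {g : Vinf K ≃ₗ[K] Vinf K} (hg : g ∈ GLBgrp K) :
    Measurable fun X : Submodule K (Vinf K) => g • X := by
  obtain ⟨N, hN⟩ := hg
  refine measurable_of_preimage_trunc (N := N) fun m hm S => ?_
  convert measurableSet_preimage_trunc m ((g • ·) ⁻¹' S) using 1
  ext X
  simp [smul_trunc (show g • Vn K m = Vn K m from hN m hm)]

instance : MeasurableConstSMul (Bgrp K) (Submodule K (Vinf K)) where
  measurable_const_smul b := measurable_smul_of_mem_GLBgrp ⟨0, fun m _ => b.2 m⟩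

omit [Finite K] in
theorem trunc_phiMap (m : ℕ) (x : ℕ → Bool) (b : Bgrp K) :
    trunc m (phiMap K (x, b)) =
      Submodule.span K {v | ∃ i < m, x i = true ∧ (b : Vinf K ≃ₗ[K] Vinf K) (.single i 1) = v} := by
  have hcoord : trunc m (coordSpan K x) =
      Submodule.span K ((fun i => Finsupp.single i (1 : K)) '' ({i | x i = true} ∩ Iio m)) := by
    rw [trunc, coordSpan, Vn_eq_supported, ← Finsupp.supported_eq_span_single,
      ← Finsupp.supported_eq_span_single, Finsupp.supported_inter]
  have hphi : trunc m (phiMap K (x, b)) =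
      (trunc m (coordSpan K x)).map ((b : Vinf K ≃ₗ[K] Vinf K) : Vinf K →ₗ[K] Vinf K) :=
    (smul_trunc (b.2 m) _).symm
  rw [hphi, hcoord, Submodule.map_span, image_image]
  congr 1
  ext v
  simp [and_assoc, and_left_comm]

theorem measurable_phiMap : Measurable (phiMap K) := by
  let _ : MeasurableSpace (Vinf K) := ⊤
  have : DiscreteMeasurableSpace (Vinf K) := ⟨fun _ => trivial⟩
  refine measurable_of_preimage_trunc (N := 0) fun m _ S => ?_
  let coords (p : (ℕ → Bool) × Bgrp K) (i : Fin m) : Bool × Vinf K :=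
    (p.1 i, (p.2 : Vinf K ≃ₗ[K] Vinf K) (.single (i : ℕ) 1))
  have heval (i : ℕ) :
      Measurable fun b : Bgrp K => (b : Vinf K ≃ₗ[K] Vinf K) (Finsupp.single i 1) :=
    (measurable_pi_apply i).comp <| comap_measurable
      fun (b : Bgrp K) (i : ℕ) => (b : Vinf K ≃ₗ[K] Vinf K) (Finsupp.single i 1)
  have hcoords : Measurable coords := measurable_pi_iff.2 fun i =>
    ((measurable_pi_apply (i : ℕ)).comp measurable_fst).prodMk ((heval i).comp measurable_snd)
  let spanOf (y : Fin m → Bool × Vinf K) : Submodule K (Vinf K) :=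
    Submodule.span K {v | ∃ i, (y i).1 = true ∧ (y i).2 = v}
  have hspan (p : (ℕ → Bool) × Bgrp K) : trunc m (phiMap K p) = spanOf (coords p) := by
    rw [← Prod.mk.eta (p := p), trunc_phiMap]
    congr 1
    ext v
    simp [coords, Fin.exists_iff, and_left_comm]
  have hS : (fun p => trunc m (phiMap K p)) ⁻¹' S = coords ⁻¹' (spanOf ⁻¹' S) := by
    ext p
    simp only [mem_preimage, hspan]
  rw [hS]
  exact hcoords .of_discrete

end Measurability

section SymbolUniform

open scoped ENNReal NNReal

variable {ν ν' η : Measure (Submodule K (Vinf K))}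

/-- `ν` is symbol-uniform at level `m` if the `ν`-mass of the event `X ∩ V_m = Y` depends on `Y`
only through its symbol. -/
def IsSymbolUniform (m : ℕ) (ν : Measure (Submodule K (Vinf K))) : Prop :=
  ∀ Y Z, symbol Y = symbol Z → ν (trunc m ⁻¹' {Y}) = ν (trunc m ⁻¹' {Z})

theorem IsSymbolUniform.const_smul (h : IsSymbolUniform m ν) (c : ℝ≥0) :
    IsSymbolUniform m (c • ν) := fun Y Z hYZ => by
  rw [Measure.smul_apply, Measure.smul_apply, h Y Z hYZ]

theorem isSymbolUniform_of_smulInvariantMeasure [Finite K] (m : ℕ)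
    [SMulInvariantMeasure (Bgrp K) (Submodule K (Vinf K)) ν] : IsSymbolUniform m ν := by
  intro Y Z hYZ
  obtain ⟨b, rfl⟩ := exists_smul_eq_of_symbol_eq hYZ
  rw [← SMulInvariantMeasure.measure_preimage_smul b (measurableSet_preimage_trunc m {b • Y})]
  congr 1
  ext X
  have htrunc : trunc m (b • X) = b • trunc m X := (smul_trunc (b.2 m) X).symm
  rw [mem_preimage, mem_preimage, mem_preimage, htrunc, mem_singleton_iff, mem_singleton_iff,
    smul_left_cancel_iff]

theorem measure_preimage_trunc_finset [Finite K] (ν : Measure (Submodule K (Vinf K))) (m : ℕ)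
    (Q : Finset (Submodule K (Vinf K))) :
    ν (trunc m ⁻¹' Q) = ∑ Y ∈ Q, ν (trunc m ⁻¹' {Y}) :=
  (sum_measure_preimage_singleton Q fun _ _ => measurableSet_preimage_trunc m _).symm

theorem preimage_symbol_cylinder (hY : Y ≤ Vn K m) :
    symbol ⁻¹' PiNat.cylinder (symbol Y) m =
      trunc m ⁻¹' {Z | Z ≤ Vn K m ∧ symbol Z = symbol Y} := by
  ext X
  rw [mem_preimage, PiNat.mem_cylinder_iff, mem_preimage]
  refine ⟨fun h => ⟨trunc_le m X, funext fun i => ?_⟩, fun h i hi => ?_⟩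
  · obtain hi | hi := lt_or_ge i m
    · rw [symbol_trunc hi, h i hi]
    · rw [symbol_eq_false_of_le_Vn (trunc_le m X) hi, symbol_eq_false_of_le_Vn hY hi]
  · rw [← symbol_trunc hi, h.2]

theorem IsSymbolUniform.measure_eq [Finite K] (hν : IsSymbolUniform m ν)
    (hν' : IsSymbolUniform m ν')
    (h : ∀ x, ν (symbol ⁻¹' PiNat.cylinder x m) = ν' (symbol ⁻¹' PiNat.cylinder x m))
    {A : Set (Submodule K (Vinf K))} (hA : MeasurableSet[levelFiltration K m] A) :
    ν A = ν' A := by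
  have hcell : ∀ Y ≤ Vn K m, ν (trunc m ⁻¹' {Y}) = ν' (trunc m ⁻¹' {Y}) := by
    intro Y hY
    have hfin : {Z : Submodule K (Vinf K) | Z ≤ Vn K m ∧ symbol Z = symbol Y}.Finite :=
      (finite_setOf_le_Vn m).subset fun Z hZ => hZ.1
    obtain ⟨Q, hQ⟩ := hfin.exists_finset_coe
    have hmass {μ : Measure (Submodule K (Vinf K))} (hμ : IsSymbolUniform m μ) :
        μ (symbol ⁻¹' PiNat.cylinder (symbol Y) m) = Q.card * μ (trunc m ⁻¹' {Y}) := by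
      rw [preimage_symbol_cylinder hY, ← hQ, measure_preimage_trunc_finset,
        Finset.sum_congr rfl fun Z hZ => hμ Z Y (hQ.subset hZ).2, Finset.sum_const, nsmul_eq_mul]
    have hYQ : Y ∈ Q := hQ.superset ⟨hY, rfl⟩
    have hcard : (Q.card : ℝ≥0∞) ≠ 0 := Nat.cast_ne_zero.2 (Finset.card_ne_zero_of_mem hYQ)
    have heq := h (symbol Y)
    rwa [hmass hν, hmass hν', ENNReal.mul_right_inj hcard (ENNReal.natCast_ne_top _)] at heq
  obtain ⟨S, rfl⟩ := measurableSet_levelFiltration.1 hA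
  obtain ⟨Q, hQ⟩ := ((finite_setOf_le_Vn m).inter_of_left S).exists_finset_coe
  have hS : trunc m ⁻¹' S = trunc m ⁻¹' ({Y | Y ≤ Vn K m} ∩ S) := by
    ext X
    simp [trunc_le]
  rw [hS, ← hQ, measure_preimage_trunc_finset, measure_preimage_trunc_finset]
  exact Finset.sum_congr rfl fun Y hY => hcell Y (hQ.subset hY).1

/-- The symbol of an `η`-random subspace is an independent identically distributed sequence with
(not necessarily normalized) entry law `w`. -/
def HasBernoulliSymbol (η : Measure (Submodule K (Vinf K))) (w : Bool → ℝ≥0) : Prop :=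
  ∀ x m, η (symbol ⁻¹' PiNat.cylinder x m) = ∏ i ∈ Finset.range m, (w (x i) : ℝ≥0∞)

variable {w : Bool → ℝ≥0}

theorem HasBernoulliSymbol.isProbabilityMeasure (hη : HasBernoulliSymbol η w) :
    IsProbabilityMeasure η := ⟨by simpa using hη (fun _ => true) 0⟩

theorem measurableSet_descents (n : ℕ) : MeasurableSet (descents n) :=
  ((measurableSet_singleton true).preimage (measurable_pi_apply n)).inter
    ((measurableSet_singleton false).preimage (measurable_pi_apply (n + 1)))

theorem cylinder_inter_descents (x : ℕ → Bool) (n : ℕ) : PiNat.cylinder x n ∩ descents n =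
    PiNat.cylinder (Function.update (Function.update x n true) (n + 1) false) (n + 2) := by
  ext y
  simp only [mem_inter_iff, PiNat.mem_cylinder_iff, descents, mem_ofPred_eq,
    Nat.forall_lt_succ_right, and_assoc]
  refine and_congr (forall₂_congr fun i hi => ?_) (and_congr ?_ ?_)
  · rw [Function.update_of_ne (by omega), Function.update_of_ne hi.ne]
  · rw [Function.update_of_ne (by omega), Function.update_self]
  · rw [Function.update_self]

theorem HasBernoulliSymbol.measure_inter_descents (hη : HasBernoulliSymbol η w) (x : ℕ → Bool)
    (n : ℕ) : η (symbol ⁻¹' (PiNat.cylinder x n ∩ descents n)) =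
      (w true * w false : ℝ≥0) * η (symbol ⁻¹' PiNat.cylinder x n) := by
  have hprod : ∏ i ∈ Finset.range n,
      (w (Function.update (Function.update x n true) (n + 1) false i) : ℝ≥0∞) =
        ∏ i ∈ Finset.range n, (w (x i) : ℝ≥0∞) :=
    Finset.prod_congr rfl fun i hi => by
      have := Finset.mem_range.1 hi
      rw [Function.update_of_ne (by omega), Function.update_of_ne (by omega)]
  rw [cylinder_inter_descents, hη, hη, Finset.prod_range_succ, Finset.prod_range_succ, hprod,
    Function.update_self, Function.update_of_ne n.lt_succ_self.ne, Function.update_self]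
  push_cast
  ring

theorem preimage_comp_swap_cylinder {m n : ℕ} (hnm : n + 2 ≤ m) (x : ℕ → Bool) :
    (· ∘ Equiv.swap n (n + 1)) ⁻¹' PiNat.cylinder x m =
      PiNat.cylinder (x ∘ Equiv.swap n (n + 1)) m := by
  have hlt {i : ℕ} (hi : i < m) : Equiv.swap n (n + 1) i < m := by
    rw [Equiv.swap_apply_def]
    split_ifs <;> omega
  ext y
  simp only [mem_preimage, PiNat.mem_cylinder_iff, Function.comp_apply]
  refine ⟨fun h i hi => ?_, fun h i hi => ?_⟩
  · simpa using h _ (hlt hi)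
  · simpa using h _ (hlt hi)

theorem HasBernoulliSymbol.measure_comp_swap (hη : HasBernoulliSymbol η w) (hnm : n + 2 ≤ m)
    (x : ℕ → Bool) : η (symbol ⁻¹' ((· ∘ Equiv.swap n (n + 1)) ⁻¹' PiNat.cylinder x m)) =
      η (symbol ⁻¹' PiNat.cylinder x m) := by
  rw [preimage_comp_swap_cylinder hnm, hη, hη]
  refine (Equiv.swap n (n + 1)).prod_comp (Finset.range m) (fun i => (w (x i) : ℝ≥0∞)) ?_
  intro i hi
  rw [Set.mem_ofPred_eq, Equiv.swap_apply_def] at hi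
  rw [Finset.coe_range, mem_Iio]
  split_ifs at hi <;> omega

theorem measure_preimage_comp_swap [Finite K]
    [SMulInvariantMeasure (Bgrp K) (Submodule K (Vinf K)) η] {T : Set (ℕ → Bool)}
    (hT : MeasurableSet T) (hTn : T ⊆ descents n) :
    η (symbol ⁻¹' ((· ∘ Equiv.swap n (n + 1)) ⁻¹' T)) =
      Nat.card K * η ((adjSwap K n • ·) ⁻¹' (symbol ⁻¹' T)) := by
  set U : Set (Submodule K (Vinf K)) := (adjSwap K n • ·) ⁻¹' (symbol ⁻¹' T)
  have hU : MeasurableSet U :=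
    measurable_smul_of_mem_GLBgrp (adjSwap_mem_GLBgrp n) (measurable_symbol hT)
  let u (c : K) : Bgrp K := ⟨adjTransvection n c, adjTransvection_mem_Bgrp n c⟩
  have hunion : symbol ⁻¹' ((· ∘ Equiv.swap n (n + 1)) ⁻¹' T) = ⋃ c, (u c • ·) ⁻¹' U := by
    ext X
    rw [mem_iUnion]
    refine ⟨fun hX => ?_, fun ⟨c, hc⟩ => ?_⟩
    · obtain ⟨c, hc⟩ := exists_symbol_adjSwap_smul_mem_descents (hTn hX)
      exact ⟨c, (congrArg (· ∈ T) (symbol_adjSwap_smul hc)).mpr hX⟩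
    · exact (congrArg (· ∈ T) (symbol_adjSwap_smul (hTn hc))).mp hc
  have hdisj : Pairwise (Function.onFun Disjoint fun c => (u c • ·) ⁻¹' U) := fun c d hcd =>
    disjoint_left.2 fun X hc hd =>
      hcd (eq_of_symbol_adjSwap_smul_mem_descents (hTn hc) (hTn hd))
  rw [hunion, measure_iUnion hdisj fun c => measurable_const_smul (u c) hU]
  simp_rw [SMulInvariantMeasure.measure_preimage_smul _ hU]
  rw [ENNReal.tsum_const, ENat.card_eq_coe_natCard]
  rfl

instance smulInvariantMeasure_restrict_preimage_symbol [Finite K]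
    [SMulInvariantMeasure (Bgrp K) (Submodule K (Vinf K)) η] (P : Set (ℕ → Bool)) :
    SMulInvariantMeasure (Bgrp K) (Submodule K (Vinf K)) (η.restrict (symbol ⁻¹' P)) where
  measure_preimage_smul b A hA := by
    have hP : (b • ·) ⁻¹' (symbol (K := K) ⁻¹' P) = symbol ⁻¹' P := by
      ext X
      exact (congrArg (· ∈ P) (symbol_smul b.2 X)).to_iff
    rw [Measure.restrict_apply (measurable_const_smul b hA), Measure.restrict_apply hA]
    conv_lhs => rw [← hP]
    exact measure_preimage_smul η b (A ∩ symbol ⁻¹' P)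

theorem HasBernoulliSymbol.measure_inter_preimage_descents [Finite K]
    [SMulInvariantMeasure (Bgrp K) (Submodule K (Vinf K)) η] (hη : HasBernoulliSymbol η w)
    {C : Set (Submodule K (Vinf K))} (hC : MeasurableSet[levelFiltration K n] C) :
    η (C ∩ symbol ⁻¹' descents n) = (w true * w false : ℝ≥0) * η C := by
  have hC' : MeasurableSet C := (levelFiltration K).le n C hC
  rw [← Measure.restrict_apply hC']
  refine IsSymbolUniform.measure_eq (isSymbolUniform_of_smulInvariantMeasure n)
    ((isSymbolUniform_of_smulInvariantMeasure n).const_smul (w true * w false)) (fun x => ?_) hC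
  rw [Measure.restrict_apply (measurable_symbol (PiNat.isOpen_cylinder _ x n).measurableSet),
    ← preimage_inter, hη.measure_inter_descents]
  rfl

theorem isSymbolUniform_map_adjSwap_restrict [Finite K] (hη : IsSymbolUniform m η)
    (hnm : n + 2 ≤ m) :
    IsSymbolUniform m ((η.map (adjSwap K n • ·)).restrict (symbol ⁻¹' descents n)) := by
  have hs := measurable_smul_of_mem_GLBgrp (adjSwap_mem_GLBgrp (K := K) n)
  have hdesc (X : Submodule K (Vinf K)) :
      symbol (trunc m X) ∈ descents n ↔ symbol X ∈ descents n := by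
    rw [descents, mem_ofPred_eq, mem_ofPred_eq, symbol_trunc (by omega), symbol_trunc (by omega)]
  have htrunc (X : Submodule K (Vinf K)) : trunc m (adjSwap K n • X) = adjSwap K n • trunc m X :=
    (smul_trunc (adjSwap_smul_Vn (by omega)) X).symm
  have hcell (Y : Submodule K (Vinf K)) :
      (η.map (adjSwap K n • ·)).restrict (symbol ⁻¹' descents n) (trunc m ⁻¹' {Y}) =
        η (trunc m ⁻¹' {Z | adjSwap K n • Z = Y ∧ symbol Y ∈ descents n}) := by
    rw [Measure.restrict_apply (measurableSet_preimage_trunc m _), Measure.map_apply hs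
      ((measurableSet_preimage_trunc m _).inter (measurable_symbol (measurableSet_descents n)))]
    congr 1
    ext X
    change trunc m (adjSwap K n • X) = Y ∧ symbol (adjSwap K n • X) ∈ descents n ↔
      adjSwap K n • trunc m X = Y ∧ symbol Y ∈ descents n
    rw [← hdesc, htrunc]
    exact and_congr_right fun h => by rw [h]
  intro Y Z hYZ
  rw [hcell, hcell, hYZ]
  by_cases hZ : symbol Z ∈ descents n
  · have hset (W : Submodule K (Vinf K)) :
        {U | adjSwap K n • U = W ∧ symbol Z ∈ descents n} = {adjSwap K n • W} := by
      ext U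
      simp only [mem_ofPred_eq, hZ, and_true, mem_singleton_iff]
      exact (involutive_adjSwap_smul n).eq_iff
    rw [hset, hset]
    refine hη _ _ ?_
    rw [symbol_adjSwap_smul_of_mem_descents hZ, symbol_adjSwap_smul_of_mem_descents (hYZ ▸ hZ), hYZ]
  · simp [hZ]

theorem HasBernoulliSymbol.measure_comp_swap_inter_descents (hη : HasBernoulliSymbol η w)
    (hnm : n + 2 ≤ m) (x : ℕ → Bool) :
    η (symbol ⁻¹' ((· ∘ Equiv.swap n (n + 1)) ⁻¹' (PiNat.cylinder x m ∩ descents n))) =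
      η (symbol ⁻¹' (PiNat.cylinder x m ∩ descents n)) := by
  have hdesc {y : ℕ → Bool} (hy : y ∈ PiNat.cylinder x m) : y ∈ descents n ↔ x ∈ descents n := by
    rw [descents, mem_ofPred_eq, mem_ofPred_eq, hy n (by omega), hy (n + 1) (by omega)]
  by_cases hx : x ∈ descents n
  · have hinter : PiNat.cylinder x m ∩ descents n = PiNat.cylinder x m :=
      inter_eq_left.2 fun y hy => (hdesc hy).2 hx
    rw [hinter, hη.measure_comp_swap hnm]
  · have hinter : PiNat.cylinder x m ∩ descents n = ∅ :=
      eq_empty_of_forall_notMem fun y hy => hx ((hdesc hy.1).1 hy.2)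
    simp [hinter]

theorem HasBernoulliSymbol.restrict_preimage_descents [Finite K]
    [SMulInvariantMeasure (Bgrp K) (Submodule K (Vinf K)) η] (hη : HasBernoulliSymbol η w) (n : ℕ) :
    η.restrict (symbol ⁻¹' descents n) =
      (Nat.card K : ℝ≥0) • (η.map (adjSwap K n • ·)).restrict (symbol ⁻¹' descents n) := by
  have := hη.isProbabilityMeasure
  have hs := measurable_smul_of_mem_GLBgrp (adjSwap_mem_GLBgrp (K := K) n)
  have hdesc := measurableSet_descents n
  have hlevel {m : ℕ} (hnm : n + 2 ≤ m) {A : Set (Submodule K (Vinf K))}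
      (hA : MeasurableSet[levelFiltration K m] A) : η.restrict (symbol ⁻¹' descents n) A =
        ((Nat.card K : ℝ≥0) • (η.map (adjSwap K n • ·)).restrict (symbol ⁻¹' descents n)) A := by
    refine IsSymbolUniform.measure_eq (isSymbolUniform_of_smulInvariantMeasure m)
      ((isSymbolUniform_map_adjSwap_restrict (isSymbolUniform_of_smulInvariantMeasure m)
        hnm).const_smul _) (fun x => ?_) hA
    have hx : MeasurableSet (PiNat.cylinder x m) := (PiNat.isOpen_cylinder _ x m).measurableSet
    rw [Measure.smul_apply, Measure.restrict_apply (measurable_symbol hx),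
      Measure.restrict_apply (measurable_symbol hx), ← preimage_inter,
      Measure.map_apply hs (measurable_symbol (hx.inter hdesc)),
      ← hη.measure_comp_swap_inter_descents hnm,
      measure_preimage_comp_swap (hx.inter hdesc) inter_subset_right]
    rfl
  have hgen := (iSup_levelFiltration (K := K)).symm.trans
    (generateFrom_measurableSet_filtration (levelFiltration K)).symm
  refine ext_of_generate_finite _ hgen
    (isSetAlgebra_measurableSet_filtration (levelFiltration K)).isSetRing.isSetSemiring.isPiSystem
    (fun A ⟨m, hA⟩ => ?_) (hlevel le_rfl (@MeasurableSet.univ _ (levelFiltration K (n + 2))))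
  exact hlevel (le_max_right m (n + 2)) ((levelFiltration K).mono (le_max_left m (n + 2)) _ hA)

theorem HasBernoulliSymbol.measure_eq_card_mul [Finite K]
    [SMulInvariantMeasure (Bgrp K) (Submodule K (Vinf K)) η] (hη : HasBernoulliSymbol η w)
    {A : Set (Submodule K (Vinf K))} (hA : MeasurableSet A) (hAn : A ⊆ symbol ⁻¹' descents n) :
    η A = (Nat.card K : ℝ≥0) * η ((adjSwap K n • ·) ⁻¹' A) := by
  have hs := measurable_smul_of_mem_GLBgrp (adjSwap_mem_GLBgrp (K := K) n)
  rw [← Measure.map_apply hs hA, ← Measure.restrict_eq_self _ hAn,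
    ← Measure.restrict_eq_self (η.map _) hAn, hη.restrict_preimage_descents n]
  rfl

theorem HasBernoulliSymbol.eq_zero_of_frequently_measurePreserving [Finite K]
    [SMulInvariantMeasure (Bgrp K) (Submodule K (Vinf K)) η] (hη : HasBernoulliSymbol η w)
    (hw : ∀ b, w b ≠ 0) {φ : Measure (Submodule K (Vinf K))} [SigmaFinite φ] (hac : φ ≪ η)
    (hφ : ∃ᶠ n in Filter.atTop, MeasurePreserving (adjSwap K n • ·) φ φ) : φ = 0 := by
  have := hη.isProbabilityMeasure
  refine _root_.eq_zero_of_frequently_measurePreserving hac (levelFiltration K) iSup_levelFiltration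
    (mul_ne_zero (hw true) (hw false)) (q := Nat.card K)
    (Nat.one_lt_cast.2 Finite.one_lt_card) involutive_adjSwap_smul
    (fun n => measurable_symbol (measurableSet_descents n)) (fun n C hC => ?_)
    (fun n C => hη.measure_inter_preimage_descents)
    (fun n A hAn hA => hη.measure_eq_card_mul hA hAn) hφ
  obtain ⟨S, rfl⟩ := measurableSet_levelFiltration.1 hC
  ext X
  rw [mem_preimage, mem_preimage, mem_preimage, trunc_adjSwap_smul]

end SymbolUniform

section Pushforward

open scoped ENNReal NNReal

variable {μ : Measure (ℕ → Bool)} {ν : Measure (Bgrp K)}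

instance : MeasurableConstSMul (Bgrp K) (Bgrp K) where
  measurable_const_smul b := by
    let _ : MeasurableSpace (Vinf K) := ⊤
    let eval (g : Bgrp K) (i : ℕ) : Vinf K := (g : Vinf K ≃ₗ[K] Vinf K) (Finsupp.single i 1)
    refine measurable_comap_iff.2 (measurable_pi_iff.2 fun i => ?_)
    exact (measurable_from_top (f := (b : Vinf K ≃ₗ[K] Vinf K))).comp
      ((measurable_pi_apply i).comp (comap_measurable eval))

theorem smulInvariantMeasure_map_phiMap [Finite K] [SFinite μ] [SFinite ν]
    [SMulInvariantMeasure (Bgrp K) (Bgrp K) ν] :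
    SMulInvariantMeasure (Bgrp K) (Submodule K (Vinf K)) ((μ.prod ν).map (phiMap K)) where
  measure_preimage_smul b A hA := by
    have hphi : (b • ·) ∘ phiMap K = phiMap K ∘ Prod.map id (b • ·) :=
      funext fun p => smul_smul (b : Vinf K ≃ₗ[K] Vinf K) p.2 (coordSpan K p.1)
    rw [Measure.map_apply measurable_phiMap (measurable_const_smul b hA),
      Measure.map_apply measurable_phiMap hA, ← preimage_comp, hphi, preimage_comp]
    exact ((MeasurePreserving.id μ).prod (measurePreserving_smul b ν)).measure_preimage
      (measurable_phiMap hA).nullMeasurableSet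

theorem symbol_phiMap (p : (ℕ → Bool) × Bgrp K) : symbol (phiMap K p) = p.1 :=
  (symbol_smul p.2.2 _).trans (symbol_coordSpan p.1)

theorem hasBernoulliSymbol_map_phiMap [Finite K] [IsProbabilityMeasure ν] {w : Bool → ℝ≥0}
    (hμ : ∀ x m, μ (PiNat.cylinder x m) = ∏ i ∈ Finset.range m, (w (x i) : ℝ≥0∞)) :
    HasBernoulliSymbol ((μ.prod ν).map (phiMap K)) w := by
  intro x m
  have hpre : phiMap K ⁻¹' (symbol ⁻¹' PiNat.cylinder x m) = PiNat.cylinder x m ×ˢ univ := by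
    ext p
    simp [symbol_phiMap]
  rw [Measure.map_apply measurable_phiMap
    (measurable_symbol (PiNat.isOpen_cylinder _ x m).measurableSet), hpre, Measure.prod_prod,
    measure_univ, mul_one, hμ]

theorem measurePreserving_adjSwap_smul [Finite K] {φ : Measure (Submodule K (Vinf K))}
    (h : ∀ A, MeasurableSet A → φ ((adjSwap K n • ·) '' A) = φ A) :
    MeasurePreserving (adjSwap K n • ·) φ φ where
  measurable := measurable_smul_of_mem_GLBgrp (adjSwap_mem_GLBgrp n)
  map_eq := Measure.ext fun A hA => by
    rw [Measure.map_apply (measurable_smul_of_mem_GLBgrp (adjSwap_mem_GLBgrp n)) hA,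
      ← (involutive_adjSwap_smul n).image_eq_preimage_symm, h A hA]

theorem no_equivalent_invariant_measure_general [Finite K] {t₁ t₂ : ℝ}
    (ht₁ : 0 < t₁) (ht₂ : 0 < t₂)
    (hμ : ∀ (n : ℕ) (c : Fin n → Bool), μ {ω | ∀ i : Fin n, ω i = c i} =
      ∏ i : Fin n, ENNReal.ofReal (if c i then t₁ else t₂)) [IsProbabilityMeasure ν]
    (hν : ∀ (b : Bgrp K) (S : Set (Bgrp K)), MeasurableSet S → ν ((b * ·) ⁻¹' S) = ν S)
    {φ η : Measure (Submodule K (Vinf K))}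
    (hη : ∀ A, MeasurableSet A → η A = (μ.prod ν) (phiMap K ⁻¹' A)) [SigmaFinite φ] (hac : φ ≪ η)
    (hφ : ∃ᶠ n in Filter.atTop, ∀ A, MeasurableSet A → φ ((adjSwap K n • ·) '' A) = φ A) :
    φ = 0 := by
  have : IsProbabilityMeasure μ := ⟨by simpa using hμ 0 Fin.elim0⟩
  have : SMulInvariantMeasure (Bgrp K) (Bgrp K) ν := ⟨hν⟩
  obtain rfl : η = (μ.prod ν).map (phiMap K) := Measure.ext fun A hA => by
    rw [hη A hA, Measure.map_apply measurable_phiMap hA]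
  have : SMulInvariantMeasure (Bgrp K) (Submodule K (Vinf K)) ((μ.prod ν).map (phiMap K)) :=
    smulInvariantMeasure_map_phiMap
  let w (b : Bool) : ℝ≥0 := (if b then t₁ else t₂).toNNReal
  have hw (b : Bool) : w b ≠ 0 := by
    cases b <;> simpa [w]
  have hcylinder (x : ℕ → Bool) (m : ℕ) :
      μ (PiNat.cylinder x m) = ∏ i ∈ Finset.range m, (w (x i) : ℝ≥0∞) := by
    have hset : PiNat.cylinder x m = {ω | ∀ i : Fin m, ω i = x i} := by
      ext y
      simp [PiNat.mem_cylinder_iff, Fin.forall_iff]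
    rw [hset, hμ m fun i => x i]
    exact Fin.prod_univ_eq_prod_range (fun i => (w (x i) : ℝ≥0∞)) m
  exact (hasBernoulliSymbol_map_phiMap hcylinder).eq_zero_of_frequently_measurePreserving hw hac
    (hφ.mono fun n => measurePreserving_adjSwap_smul)

end Pushforward

end Grassmannian

/-- **Proposition 5.8** (nonexistence of an equivalent invariant measure on the grassmannian).
Let `t₁, t₂ > 0` with `t₁ + t₂ = 1`, and let `η = η_{t₁,t₂}` be the pushforward of
`μBer ⊗ μB` (Bernoulli times Haar) under `φ(x,g) = g·C(x)`. Then there is no σ-finite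
`GLB`-invariant measure on `Gr(V)` that is equivalent to `η`. -/
theorem no_equivalent_invariant_measure
    (t₁ t₂ : ℝ) (ht₁ : 0 < t₁) (ht₂ : 0 < t₂) (hsum : t₁ + t₂ = 1)
    (μBer : Measure (ℕ → Bool))
    (hBer : ∀ (n : ℕ) (c : Fin n → Bool),
      μBer {ω | ∀ i : Fin n, ω (i : ℕ) = c i}
        = ∏ i : Fin n, ENNReal.ofReal (if c i then t₁ else t₂))
    (μB : Measure ↥(Bgrp F)) (hμBprob : IsProbabilityMeasure μB)
    (hμBinv : ∀ (b : ↥(Bgrp F)) (S : Set ↥(Bgrp F)), MeasurableSet S →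
      μB ((fun x => b * x) ⁻¹' S) = μB S)
    (η : Measure (Submodule F (Vinf F)))
    (hη : ∀ A : Set (Submodule F (Vinf F)), MeasurableSet A →
      η A = (μBer.prod μB) (phiMap F ⁻¹' A)) :
    ¬ ∃ φ : Measure (Submodule F (Vinf F)),
      SigmaFinite φ ∧
      (∀ g : (Vinf F) ≃ₗ[F] (Vinf F), g ∈ GLBgrp F →
        ∀ A : Set (Submodule F (Vinf F)), MeasurableSet A →
        φ ((fun X => Submodule.map (g : (Vinf F) →ₗ[F] (Vinf F)) X) '' A) = φ A) ∧
      (∀ A : Set (Submodule F (Vinf F)), MeasurableSet A → (φ A = 0 ↔ η A = 0)) := by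
  rintro ⟨φ, hσ, hinv, hequiv⟩
  have hφ : φ = 0 := no_equivalent_invariant_measure_general ht₁ ht₂ hBer hμBinv hη
    (.mk fun A hA => (hequiv A hA).2) (.of_forall fun n => hinv _ (adjSwap_mem_GLBgrp n))
  have : IsProbabilityMeasure μBer := ⟨by simpa using hBer 0 Fin.elim0⟩
  have hη0 : η Set.univ = 0 := (hequiv _ .univ).1 (by simp [hφ])
  simp [hη _ .univ] at hη0
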